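/- Let I ∈ S_i, let λ be any weight, and write s_j = (λ,σ_j) + j. The following identities hold in M(λ): (a) for 1 < i ≤ N: e_i f_I H_I v_λ = [(λ,α_i)]_v f_{I₁} f_{I₂} H_I v_λ if i = N, and e_i f_I H_I v_λ = [1 + (λ,α_i)]_v f_{I₁} f_{I₂} H_I v_λ if i < N; (b) for 1 < i ≤ N: e_i f_{I⁺} H_{I⁺} v_λ = q² v^{-s_i} [s_{i-1}]_v f_{I₁} f_{I₂} H_I v_λ if i = N, and e_i f_{I⁺} H_{I⁺} v_λ = v^{-s_i} [s_{i-1}]_v f_{I₁} f_{I₂} H_I v_λ if i < N; (c) for 1 < i < N: e_i f_{I⁻} H_{I⁻} v_λ = -v^{-s_{i-1}} [s_i]_v f_{I₁} f_{I₂} H_I v_λ. -/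

import Mathlib

noncomputable section

open FreeAlgebra

/-- `𝕜 = F(q)`, the field of rational functions over `F`. -/
abbrev kk (F : Type) [Field F] : Type := RatFunc F

/-- The variable `q`. -/
def qq (F : Type) [Field F] : kk F := RatFunc.X

/-- `v = q²`. -/
def vv (F : Type) [Field F] : kk F := qq F ^ 2

/-- The balanced quantum integer `[n]_v`. -/
def qint (F : Type) [Field F] (n : ℤ) : kk F :=
  (vv F ^ n - vv F ^ (-n)) / (vv F - (vv F)⁻¹)

/-- The quantum factorial `[m]_v!`. -/
def qfact (F : Type) [Field F] (m : ℕ) : kk F :=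
  ∏ j ∈ Finset.Icc 1 m, qint F j

/-- The balanced Gaussian binomial coefficient `C(n,i)_v`. -/
def qbinom (F : Type) [Field F] (n i : ℕ) : kk F :=
  qfact F n / (qfact F i * qfact F (n - i))

/-- The Cartan matrix of `sl(N+1)`, with 1-based indices. -/
def cartan (i j : ℕ) : ℤ :=
  if i = j then 2 else if i + 1 = j ∨ j + 1 = i then -1 else 0

/-- Generators of `U_q(sl(N+1))`: `e i`, `f i`, `k i`, `kinv i` (0-based `i : Fin N`,
corresponding to the 1-based index `i+1`). -/
inductive Gen (N : ℕ) : Type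
  | e : Fin N → Gen N
  | f : Fin N → Gen N
  | k : Fin N → Gen N
  | kinv : Fin N → Gen N

/-- The defining relations of `U_q(sl(N+1))`. -/
inductive UqRel (F : Type) [Field F] (N : ℕ) :
    FreeAlgebra (kk F) (Gen N) → FreeAlgebra (kk F) (Gen N) → Prop
  | kkinv (i : Fin N) : UqRel F N (ι (kk F) (Gen.k i) * ι (kk F) (Gen.kinv i)) 1
  | kinvk (i : Fin N) : UqRel F N (ι (kk F) (Gen.kinv i) * ι (kk F) (Gen.k i)) 1
  | kcomm (i j : Fin N) :
      UqRel F N (ι (kk F) (Gen.k i) * ι (kk F) (Gen.k j))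
        (ι (kk F) (Gen.k j) * ι (kk F) (Gen.k i))
  | ke (i j : Fin N) :
      UqRel F N (ι (kk F) (Gen.k i) * ι (kk F) (Gen.e j) * ι (kk F) (Gen.kinv i))
        ((qq F ^ cartan ((i : ℕ) + 1) ((j : ℕ) + 1)) • ι (kk F) (Gen.e j))
  | kf (i j : Fin N) :
      UqRel F N (ι (kk F) (Gen.k i) * ι (kk F) (Gen.f j) * ι (kk F) (Gen.kinv i))
        ((qq F ^ (-cartan ((i : ℕ) + 1) ((j : ℕ) + 1))) • ι (kk F) (Gen.f j))
  | ef (i j : Fin N) :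
      UqRel F N (ι (kk F) (Gen.e i) * ι (kk F) (Gen.f j) - ι (kk F) (Gen.f j) * ι (kk F) (Gen.e i))
        (if i = j then
          ((qq F ^ 2 - qq F ^ (-2 : ℤ))⁻¹) •
            ((ι (kk F) (Gen.k i)) ^ 2 - (ι (kk F) (Gen.kinv i)) ^ 2)
        else 0)
  | serre_e_near (i j : Fin N) (h : (i : ℕ) + 1 = j ∨ (j : ℕ) + 1 = i) :
      UqRel F N
        ((ι (kk F) (Gen.e i)) ^ 2 * ι (kk F) (Gen.e j)
          - (qq F ^ 2 + qq F ^ (-2 : ℤ)) •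
              (ι (kk F) (Gen.e i) * ι (kk F) (Gen.e j) * ι (kk F) (Gen.e i))
          + ι (kk F) (Gen.e j) * (ι (kk F) (Gen.e i)) ^ 2) 0
  | serre_f_near (i j : Fin N) (h : (i : ℕ) + 1 = j ∨ (j : ℕ) + 1 = i) :
      UqRel F N
        ((ι (kk F) (Gen.f i)) ^ 2 * ι (kk F) (Gen.f j)
          - (qq F ^ 2 + qq F ^ (-2 : ℤ)) •
              (ι (kk F) (Gen.f i) * ι (kk F) (Gen.f j) * ι (kk F) (Gen.f i))
          + ι (kk F) (Gen.f j) * (ι (kk F) (Gen.f i)) ^ 2) 0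
  | serre_e_far (i j : Fin N) (h : (i : ℕ) + 1 < j ∨ (j : ℕ) + 1 < i) :
      UqRel F N (ι (kk F) (Gen.e i) * ι (kk F) (Gen.e j))
        (ι (kk F) (Gen.e j) * ι (kk F) (Gen.e i))
  | serre_f_far (i j : Fin N) (h : (i : ℕ) + 1 < j ∨ (j : ℕ) + 1 < i) :
      UqRel F N (ι (kk F) (Gen.f i) * ι (kk F) (Gen.f j))
        (ι (kk F) (Gen.f j) * ι (kk F) (Gen.f i))

/-- The quantized enveloping algebra `U = U_q(sl(N+1))`. -/
abbrev Uq (F : Type) [Field F] (N : ℕ) : Type := RingQuot (UqRel F N)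

variable (F : Type) [Field F] (N : ℕ)

/-- The image of a generator in `U`. -/
def gen (g : Gen N) : Uq F N := RingQuot.mkAlgHom (kk F) (UqRel F N) (ι (kk F) g)

/-- `e_i` (1-based index `1 ≤ i ≤ N`; junk value `0` outside this range). -/
def egen (i : ℕ) : Uq F N :=
  if h : 1 ≤ i ∧ i ≤ N then gen F N (Gen.e ⟨i - 1, by omega⟩) else 0

/-- `f_i` (1-based index). -/
def fgen (i : ℕ) : Uq F N :=
  if h : 1 ≤ i ∧ i ≤ N then gen F N (Gen.f ⟨i - 1, by omega⟩) else 0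

/-- `k_i` (1-based index). -/
def kgen (i : ℕ) : Uq F N :=
  if h : 1 ≤ i ∧ i ≤ N then gen F N (Gen.k ⟨i - 1, by omega⟩) else 0

/-- `k_i⁻¹` (1-based index). -/
def kinvgen (i : ℕ) : Uq F N :=
  if h : 1 ≤ i ∧ i ≤ N then gen F N (Gen.kinv ⟨i - 1, by omega⟩) else 0

/-- Auxiliary recursion: `fword i d = f_{i, i+1+d}`. -/
def fword (i : ℕ) : ℕ → Uq F N
  | 0 => fgen F N i
  | d + 1 =>
      qq F • (fword i d * fgen F N (i + 1 + d)) -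
        (qq F)⁻¹ • (fgen F N (i + 1 + d) * fword i d)

/-- The quantum root vector `f_{i,j}` (for `1 ≤ i < j ≤ N+1`). -/
def fij (i j : ℕ) : Uq F N := fword F N i (j - i - 1)

/-- Product of `f_{a,b}` over successive entries of a list. -/
def fList : List ℕ → Uq F N
  | a :: b :: rest => fij F N a b * fList (b :: rest)
  | _ => 1

/-- `f_S` for a finite set `S` of indices. -/
def fSet (S : Finset ℕ) : Uq F N := fList F N (S.sort (· ≤ ·))

/-- The index set `𝕀` of subsets of `{1,…,N+1}` containing `1` and `N+1`. -/
def II : Finset (Finset ℕ) :=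
  (Finset.Icc 1 (N + 1)).powerset.filter fun I => 1 ∈ I ∧ N + 1 ∈ I

/-- `r(I) = {s - 1 : s ∈ {1,…,N+1} \ I}`. -/
def rSet (I : Finset ℕ) : Finset ℕ := (Finset.Icc 1 (N + 1) \ I).image (· - 1)

/-- `k_{σ_i} = k_1 ⋯ k_i`. -/
def kσ (i : ℕ) : Uq F N := ((List.range i).map fun j => kgen F N (j + 1)).prod

/-- `K_{σ_i} = k_{σ_i}²`. -/
def Kσ (i : ℕ) : Uq F N := kσ F N i ^ 2

/-- `k_{σ_i}⁻¹ = k_1⁻¹ ⋯ k_i⁻¹`. -/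
def kσinv (i : ℕ) : Uq F N := ((List.range i).map fun j => kinvgen F N (j + 1)).prod

/-- `K_{σ_i}⁻¹`. -/
def KσInv (i : ℕ) : Uq F N := kσinv F N i ^ 2

/-- The element `h_i = -q⁻¹ v^{-(i-1)} K_{σ_i}⁻¹ (K_{σ_i} v^i - K_{σ_i}⁻¹ v^{-i})/(v - v⁻¹) ∈ U`. -/
def hElt (i : ℕ) : Uq F N :=
  (-(qq F)⁻¹ * vv F ^ (1 - (i : ℤ)) * (vv F - (vv F)⁻¹)⁻¹) •
    (KσInv F N i * (vv F ^ (i : ℤ) • Kσ F N i - vv F ^ (-(i : ℤ)) • KσInv F N i))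

/-- `H_I = ∏_{i ∈ r(I)} h_i` (product taken in increasing order of indices). -/
def HI (I : Finset ℕ) : Uq F N := (((rSet N I).sort (· ≤ ·)).map (hElt F N)).prod

/-- A weight `λ` is recorded by its values `(λ, α_j)` for `1 ≤ j ≤ N`;
`pairσ lam i = (λ, σ_i) = (λ, α_1 + ⋯ + α_i)`. -/
def pairσ (lam : ℕ → ℤ) (i : ℕ) : ℤ := ∑ j ∈ Finset.Icc 1 i, lam j

/-- The scalar `h_i(λ) = -q⁻¹ v^{-((λ,σ_i)+i-1)} [(λ,σ_i)+i]_v`. -/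
def hval (lam : ℕ → ℤ) (i : ℕ) : kk F :=
  -(qq F)⁻¹ * vv F ^ (-(pairσ lam i + (i : ℤ) - 1)) * qint F (pairσ lam i + (i : ℤ))

/-- The scalar `H_I(λ) = ∏_{i ∈ r(I)} h_i(λ)`. -/
def HIval (lam : ℕ → ℤ) (I : Finset ℕ) : kk F := ∏ i ∈ rSet N I, hval F lam i

/-- The left ideal `J_λ` of `U` generated by `e_1, …, e_N` and the `k_j - q^{(λ,α_j)}`. -/
def vermaIdeal (lam : ℕ → ℤ) : Submodule (Uq F N) (Uq F N) :=
  Submodule.span (Uq F N)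
    ({x | ∃ j, 1 ≤ j ∧ j ≤ N ∧ x = egen F N j} ∪
      {x | ∃ j, 1 ≤ j ∧ j ≤ N ∧
        x = kgen F N j - algebraMap (kk F) (Uq F N) (qq F ^ lam j)})

/-- The Verma module `M(λ) = U/J_λ`. -/
abbrev Verma (lam : ℕ → ℤ) : Type := Uq F N ⧸ vermaIdeal F N lam

/-- The highest weight vector `v_λ`, the image of `1` in `M(λ)`. -/
def hw (lam : ℕ → ℤ) : Verma F N lam := Submodule.Quotient.mk 1

/-- The candidate Shapovalov element `Θ_η = Σ_{I ∈ 𝕀} f_I H_I`. -/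
def Theta : Uq F N := ∑ I ∈ II N, fSet F N I * HI F N I

/-- `D^n(λ)`: the `(n-1) × (n-1)` matrix over `U` with `(i,j)` entry (1-based)
`f_{i,j+1}` if `i ≤ j`, `-h_j(λ)·1` if `i = j+1`, and `0` otherwise. -/
def Dmat (lam : ℕ → ℤ) (n : ℕ) : Matrix (Fin (n - 1)) (Fin (n - 1)) (Uq F N) :=
  Matrix.of fun i j =>
    if (i : ℕ) ≤ (j : ℕ) then fij F N ((i : ℕ) + 1) ((j : ℕ) + 2)
    else if (i : ℕ) = (j : ℕ) + 1 then
      -(algebraMap (kk F) (Uq F N) (hval F lam ((j : ℕ) + 1)))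
    else 0

/-- The left-to-right determinant of a matrix with noncommutative entries. -/
def ldet {m : ℕ} (B : Matrix (Fin m) (Fin m) (Uq F N)) : Uq F N :=
  ∑ w : Equiv.Perm (Fin m),
    ((Equiv.Perm.sign w : ℤˣ) : ℤ) • ((List.finRange m).map fun j => B (w j) j).prod

end

/-!
Cut `I ∈ S_i` into `I₁ = I ∩ [1, i]` and `I₂ = I ∩ [i + 1, N + 1]`. Then
`f_I = f_{I₁} f_i f_{I₂}`, while `f_{I⁺}` and `f_{I⁻}` each contain a single factor that fails to
commute with `e_i`: it is `f_{a,i+1}` with `a` the predecessor of `i` in `I`, respectively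
`f_{i,b}` with `b` the successor of `i + 1`. The commutator of `e_i` with the critical factor is
the Cartan term `(K_i - K_i⁻¹) / (v - v⁻¹)` for `f_i`, it is `-q⁻¹ f_{a,i} K_i⁻¹` for `f_{a,i+1}`,
and it is `q f_{i+1,b} K_i` for `f_{i,b}`; in the last two cases the remaining `f_{a,i}`,
`f_{i+1,b}` completes the product to `f_{I₁} f_{I₂}`. Everything to the right of the commutator is
a weight vector, on which `K_i^{±1}` acts by a scalar, and the weight of `f_S` telescopes to
`ε_{max S} - ε_{min S}`; this is where the cases `i = N` and `i < N` part. Finally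
`H_{I⁺}(λ) = h_{i-1}(λ) H_I(λ)` and `H_{I⁻}(λ) = h_i(λ) H_I(λ)`, whose first factors produce the
coefficients in (b) and (c).
-/

section QBracket

variable {R A : Type*} [Field R] [Ring A] [Algebra R A]

/-- The `q`-commutator `q x y - q⁻¹ y x`, in terms of which the recursion for the root vectors
reads `f_{i,j} = qBracket q f_{i,j-1} f_{j-1,j}`. -/
def qBracket (q : R) (x y : A) : A := q • (x * y) - q⁻¹ • (y * x)

theorem qBracket_assoc (q : R) {x z : A} (h : Commute x z) (y : A) :
    qBracket q (qBracket q x y) z = qBracket q x (qBracket q y z) := by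
  have hl : y * x * z = y * z * x := by rw [mul_assoc, h.eq, mul_assoc]
  have hr : z * (x * y) = x * (z * y) := by rw [← mul_assoc, ← h.eq, mul_assoc]
  simp only [qBracket, mul_sub, sub_mul, smul_mul_assoc, mul_smul_comm, hl, hr, ← mul_assoc]
  module

theorem commute_qBracket (q : R) {x y z : A} (hy : Commute x y) (hz : Commute x z) :
    Commute x (qBracket q y z) :=
  ((hy.mul_right hz).smul_right q).sub_right ((hz.mul_right hy).smul_right q⁻¹)

theorem mul_mul_of_commute_left {e x y c : A} (hx : Commute e x) (hy : e * y = y * e + c) :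
    e * (x * y) = x * y * e + x * c := by
  rw [← mul_assoc, hx.eq, mul_assoc, hy, mul_add, mul_assoc]

theorem mul_mul_of_commute_right {e x y c : A} (hx : Commute e x) (hy : e * y = y * e + c) :
    e * (y * x) = y * x * e + c * x := by
  rw [← mul_assoc, hy, add_mul, mul_assoc, hx.eq, mul_assoc]

theorem mul_qBracket_of_commute_left (q : R) {e x y c : A} (hx : Commute e x)
    (hy : e * y = y * e + c) : e * qBracket q x y = qBracket q x y * e + qBracket q x c := by
  simp only [qBracket, mul_sub, sub_mul, mul_smul_comm, smul_mul_assoc,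
    mul_mul_of_commute_left hx hy, mul_mul_of_commute_right hx hy]
  module

theorem mul_qBracket_of_commute_right (q : R) {e x y c : A} (hx : Commute e x)
    (hy : e * y = y * e + c) : e * qBracket q y x = qBracket q y x * e + qBracket q c x := by
  simp only [qBracket, mul_sub, sub_mul, mul_smul_comm, smul_mul_assoc,
    mul_mul_of_commute_left hx hy, mul_mul_of_commute_right hx hy]
  module

variable {q : R} {K L x : A}

theorem qBracket_cartan_right (hq : q ≠ 0) (hv : q ^ 2 - (q ^ 2)⁻¹ ≠ 0)
    (hK : SemiconjBy K x (q ^ 2 • x)) (hL : SemiconjBy L x ((q ^ 2)⁻¹ • x)) :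
    qBracket q x ((q ^ 2 - (q ^ 2)⁻¹)⁻¹ • (K - L)) = x * (-q⁻¹ • L) := by
  have hz := inv_mul_cancel₀ hv
  generalize (q ^ 2 - (q ^ 2)⁻¹)⁻¹ = z at hz
  simp only [qBracket, mul_sub, sub_mul, mul_smul_comm, smul_mul_assoc, hK.eq, hL.eq]
  match_scalars <;> field_simp at hz ⊢
  · ring
  · linear_combination -hz

theorem qBracket_cartan_left (hq : q ≠ 0) (hv : q ^ 2 - (q ^ 2)⁻¹ ≠ 0)
    (hK : SemiconjBy K x (q ^ 2 • x)) (hL : SemiconjBy L x ((q ^ 2)⁻¹ • x)) :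
    qBracket q ((q ^ 2 - (q ^ 2)⁻¹)⁻¹ • (K - L)) x = x * (q • K) := by
  have hz := inv_mul_cancel₀ hv
  generalize (q ^ 2 - (q ^ 2)⁻¹)⁻¹ = z at hz
  simp only [qBracket, mul_sub, sub_mul, mul_smul_comm, smul_mul_assoc, hK.eq, hL.eq]
  match_scalars <;> field_simp at hz ⊢
  · linear_combination hz
  · ring

end QBracket

section Module

variable {R A M : Type*} [CommRing R] [Ring A] [Algebra R A] [AddCommGroup M] [Module A M]
  [Module R M] [IsScalarTower R A M]

theorem smul_mul_mul_smul_of_commute {e P g y T B : A} {w : M} {c : R} (hP : Commute e P)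
    (hB : Commute e B) (hw : e • w = 0) (hg : e * g = g * e + y * T)
    (hT : T • B • w = c • B • w) : e • (P * g * B) • w = c • (P * y * B) • w := by
  have hBw : e • B • w = 0 := by rw [smul_smul, hB.eq, mul_smul, hw, smul_zero]
  calc e • (P * g * B) • w = P • (e * g) • B • w := by
        simp only [smul_smul, ← mul_assoc, hP.eq]
    _ = P • y • T • B • w := by rw [hg, add_smul, mul_smul, hBw, smul_zero, zero_add, mul_smul]
    _ = c • (P * y * B) • w := by
        rw [hT, smul_comm y, smul_comm P, smul_smul y, smul_smul P, mul_assoc]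

theorem list_prod_smul_eq_smul {ι : Type*} {g : ι → A} {c : ι → R} {w : M} (l : List ι)
    (h : ∀ i ∈ l, g i • w = c i • w) : (l.map g).prod • w = (l.map c).prod • w := by
  induction l with
  | nil => simp
  | cons i l ih =>
    rw [List.forall_mem_cons] at h
    rw [List.map_cons, List.prod_cons, List.map_cons, List.prod_cons, mul_smul, ih h.2, smul_comm,
      h.1, smul_smul, mul_comm]

end Module

section QuantumParameter

variable (F : Type) [Field F]

theorem qq_ne_zero : qq F ≠ 0 := RatFunc.X_ne_zero

theorem vv_ne_zero : vv F ≠ 0 := pow_ne_zero _ (qq_ne_zero F)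

theorem vv_sub_inv_ne_zero : vv F - (vv F)⁻¹ ≠ 0 := by
  rw [sub_ne_zero, ne_eq, ← mul_eq_one_iff_eq_inv₀ (vv_ne_zero F)]
  intro hv
  have hX : (Polynomial.X : Polynomial F) ^ 4 = 1 := by
    apply RatFunc.algebraMap_injective F
    rw [map_pow, RatFunc.algebraMap_X, map_one, ← hv, vv, qq]
    ring
  simpa using congrArg Polynomial.natDegree hX

theorem qq_zpow_sq (n : ℤ) : (qq F ^ n) ^ 2 = vv F ^ n := by
  rw [vv, ← zpow_natCast, ← zpow_natCast, zpow_comm]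

end QuantumParameter

section Relations

variable {F : Type} [Field F] {N : ℕ}

theorem commute_egen_fgen {i j : ℕ} (h : i ≠ j) : Commute (egen F N i) (fgen F N j) := by
  unfold egen fgen
  split_ifs with hi hj
  · have := RingQuot.mkAlgHom_rel (kk F)
      (UqRel.ef (F := F) (⟨i - 1, by omega⟩ : Fin N) ⟨j - 1, by omega⟩)
    rw [if_neg (by rw [Fin.mk.injEq]; omega), map_sub, map_mul, map_mul, map_zero] at this
    exact sub_eq_zero.mp this
  all_goals simp

theorem egen_mul_fgen_self (i : ℕ) : egen F N i * fgen F N i = fgen F N i * egen F N i +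
    (vv F - (vv F)⁻¹)⁻¹ • (kgen F N i ^ 2 - kinvgen F N i ^ 2) := by
  unfold egen fgen kgen kinvgen
  split_ifs with hi
  · have := RingQuot.mkAlgHom_rel (kk F)
      (UqRel.ef (F := F) (⟨i - 1, by omega⟩ : Fin N) ⟨i - 1, by omega⟩)
    simp only [if_true, map_sub, map_mul, map_smul, map_pow] at this
    exact sub_eq_iff_eq_add'.mp this
  · simp

theorem kgen_mul_kinvgen {i : ℕ} (hi : 1 ≤ i ∧ i ≤ N) : kgen F N i * kinvgen F N i = 1 := by
  simpa [kgen, kinvgen, gen, hi] using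
    RingQuot.mkAlgHom_rel (kk F) (UqRel.kkinv (F := F) (⟨i - 1, by omega⟩ : Fin N))

theorem kinvgen_mul_kgen {i : ℕ} (hi : 1 ≤ i ∧ i ≤ N) : kinvgen F N i * kgen F N i = 1 := by
  simpa [kgen, kinvgen, gen, hi] using
    RingQuot.mkAlgHom_rel (kk F) (UqRel.kinvk (F := F) (⟨i - 1, by omega⟩ : Fin N))

theorem kgen_mul_fgen_mul_kinvgen {i : ℕ} (hi : 1 ≤ i ∧ i ≤ N) (j : ℕ) :
    kgen F N i * fgen F N j * kinvgen F N i = qq F ^ (-cartan i j) • fgen F N j := by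
  unfold kgen kinvgen fgen
  rw [dif_pos hi, dif_pos hi]
  split_ifs with hj
  · have := RingQuot.mkAlgHom_rel (kk F)
      (UqRel.kf (F := F) (⟨i - 1, by omega⟩ : Fin N) ⟨j - 1, by omega⟩)
    simpa only [gen, map_mul, map_smul, Nat.sub_add_cancel hi.1, Nat.sub_add_cancel hj.1] using this
  · simp

theorem commute_fgen_fgen {i j : ℕ} (h : i + 1 < j) : Commute (fgen F N i) (fgen F N j) := by
  unfold fgen
  split_ifs with hi hj
  · have := RingQuot.mkAlgHom_rel (kk F)
      (UqRel.serre_f_far (F := F) (⟨i - 1, by omega⟩ : Fin N) ⟨j - 1, by omega⟩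
        (.inl (by grind)))
    rwa [map_mul, map_mul] at this
  all_goals simp

end Relations

section Weights

variable {F : Type} [Field F] {N m : ℕ}

/-- `x` is a weight vector for conjugation by `k_m`: if `x` has weight `μ`, then `c = (μ, α_m)`. -/
def HasWeight (m : ℕ) (c : ℤ) (x : Uq F N) : Prop :=
  SemiconjBy (kgen F N m) x (qq F ^ c • x)

namespace HasWeight

variable {c d : ℤ} {x y : Uq F N}

theorem one : HasWeight m 0 (1 : Uq F N) := by simp [HasWeight]

theorem mul (hx : HasWeight m c x) (hy : HasWeight m d y) : HasWeight m (c + d) (x * y) := by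
  simpa only [HasWeight, smul_mul_smul_comm, zpow_add₀ (qq_ne_zero F)] using
    SemiconjBy.mul_right hx hy

theorem smul (hx : HasWeight m c x) (a : kk F) : HasWeight m c (a • x) := by
  simpa only [HasWeight, smul_comm a] using SemiconjBy.smul_right hx a

theorem sub (hx : HasWeight m c x) (hy : HasWeight m c y) : HasWeight m c (x - y) := by
  simpa only [HasWeight, smul_sub] using SemiconjBy.sub_right hx hy

theorem qBracket (hx : HasWeight m c x) (hy : HasWeight m d y) :
    HasWeight m (c + d) (qBracket (qq F) x y) :=
  ((hx.mul hy).smul _).sub ((add_comm d c ▸ hy.mul hx).smul _)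

theorem semiconjBy_kgen_sq (h : HasWeight m c x) :
    SemiconjBy (kgen F N m ^ 2) x (vv F ^ c • x) := by
  have := SemiconjBy.mul_left (SemiconjBy.smul_right h (qq F ^ c)) h
  rwa [smul_smul, ← pow_two, ← pow_two, qq_zpow_sq] at this

theorem semiconjBy_kinvgen (h : HasWeight m c x) :
    SemiconjBy (kinvgen F N m) x (qq F ^ (-c) • x) := by
  by_cases hm : 1 ≤ m ∧ m ≤ N
  · have hx : x * kinvgen F N m = qq F ^ c • (kinvgen F N m * x) := by
      calc x * kinvgen F N m
          = kinvgen F N m * (kgen F N m * x) * kinvgen F N m := by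
            rw [← mul_assoc, kinvgen_mul_kgen hm, one_mul]
        _ = qq F ^ c • (kinvgen F N m * x) := by
            rw [h.eq, smul_mul_assoc, mul_smul_comm, smul_mul_assoc, mul_assoc, mul_assoc,
              kgen_mul_kinvgen hm, mul_one]
    rw [SemiconjBy, smul_mul_assoc, hx, smul_smul, ← zpow_add₀ (qq_ne_zero F), neg_add_cancel,
      zpow_zero, one_smul]
  · simp [kinvgen, hm]

theorem semiconjBy_kinvgen_sq (h : HasWeight m c x) :
    SemiconjBy (kinvgen F N m ^ 2) x (vv F ^ (-c) • x) := by
  have := SemiconjBy.mul_left (SemiconjBy.smul_right h.semiconjBy_kinvgen (qq F ^ (-c)))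
    h.semiconjBy_kinvgen
  rwa [smul_smul, ← pow_two, ← pow_two, qq_zpow_sq] at this

end HasWeight

/-- The pairing `(ε_j, α_m)` in the standard coordinates `α_m = ε_m - ε_{m+1}`, in which
`f_{i,j}` has weight `ε_j - ε_i`. -/
def pairε (m j : ℕ) : ℤ := if m = j then 1 else if m + 1 = j then -1 else 0

theorem cartan_eq_pairε_sub (i j : ℕ) : cartan i j = pairε i j - pairε i (j + 1) := by
  grind [cartan, pairε]

theorem hasWeight_fgen (m j : ℕ) : HasWeight m (pairε m (j + 1) - pairε m j) (fgen F N j) := by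
  by_cases hm : 1 ≤ m ∧ m ≤ N
  · rw [← neg_sub, ← cartan_eq_pairε_sub, HasWeight, ← kgen_mul_fgen_mul_kinvgen hm, SemiconjBy,
      mul_assoc, kinvgen_mul_kgen hm, mul_one]
  · simp [HasWeight, kgen, hm]

end Weights

section RootVectors

variable {F : Type} [Field F] {N : ℕ}

theorem fij_succ_self (i : ℕ) : fij F N i (i + 1) = fgen F N i := by
  rw [fij, Nat.add_sub_cancel_left, Nat.sub_self, fword]

theorem fij_succ_right {i j : ℕ} (h : i < j) :
    fij F N i (j + 1) = qBracket (qq F) (fij F N i j) (fgen F N j) := by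
  obtain ⟨d, rfl⟩ := Nat.exists_eq_add_of_lt h
  have hd : i + d + 1 - i - 1 = d := by omega
  have hd' : i + d + 1 + 1 - i - 1 = d + 1 := by omega
  rw [fij, fij, hd, hd', fword, qBracket, add_right_comm]

theorem commute_egen_fij {m i j : ℕ} (hij : i < j) (h : m < i ∨ j ≤ m) :
    Commute (egen F N m) (fij F N i j) := by
  induction j, hij using Nat.le_induction with
  | base => exact fij_succ_self (F := F) (N := N) i ▸ commute_egen_fgen (by omega)
  | succ j hij ih =>
    rw [fij_succ_right hij]
    exact commute_qBracket _ (ih (by omega)) (commute_egen_fgen (by omega))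

theorem fij_eq_qBracket_left {i j : ℕ} (h : i + 1 < j) :
    fij F N i j = qBracket (qq F) (fgen F N i) (fij F N (i + 1) j) := by
  induction j, h using Nat.le_induction with
  | base => rw [fij_succ_right (by omega), fij_succ_self, fij_succ_self]
  | succ j hj ih =>
    rw [fij_succ_right (by omega), ih, fij_succ_right hj,
      qBracket_assoc _ (commute_fgen_fgen (by omega))]

theorem hasWeight_fij (m : ℕ) {i j : ℕ} (hij : i < j) :
    HasWeight m (pairε m j - pairε m i) (fij F N i j) := by
  induction j, hij using Nat.le_induction with
  | base => exact fij_succ_self (F := F) (N := N) i ▸ hasWeight_fgen m i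
  | succ j hij ih =>
    rw [fij_succ_right hij, ← sub_add_sub_cancel']
    exact ih.qBracket (hasWeight_fgen m j)

theorem egen_mul_fij_succ_right {a i : ℕ} (h : a < i) :
    egen F N i * fij F N a (i + 1) =
      fij F N a (i + 1) * egen F N i + fij F N a i * (-(qq F)⁻¹ • kinvgen F N i ^ 2) := by
  have hw : HasWeight i 1 (fij F N a i) := by
    simpa [pairε, h.ne', (Nat.lt_succ_of_lt h).ne'] using hasWeight_fij (F := F) (N := N) i h
  rw [fij_succ_right h, mul_qBracket_of_commute_left _ (commute_egen_fij h (.inr le_rfl))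
    (egen_mul_fgen_self i), vv, qBracket_cartan_right (qq_ne_zero F) (vv_sub_inv_ne_zero F)]
  · simpa [vv] using hw.semiconjBy_kgen_sq
  · simpa [vv] using hw.semiconjBy_kinvgen_sq

theorem egen_mul_fij_left {i b : ℕ} (h : i + 1 < b) :
    egen F N i * fij F N i b =
      fij F N i b * egen F N i + fij F N (i + 1) b * (qq F • kgen F N i ^ 2) := by
  have hw : HasWeight i 1 (fij F N (i + 1) b) := by
    simpa [pairε, h.ne, (Nat.lt_of_succ_lt h).ne] using hasWeight_fij (F := F) (N := N) i h
  rw [fij_eq_qBracket_left h, mul_qBracket_of_commute_right _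
    (commute_egen_fij h (.inl i.lt_succ_self)) (egen_mul_fgen_self i), vv,
    qBracket_cartan_left (qq_ne_zero F) (vv_sub_inv_ne_zero F)]
  · simpa [vv] using hw.semiconjBy_kgen_sq
  · simpa [vv] using hw.semiconjBy_kinvgen_sq

end RootVectors

section FiniteChains

variable {α : Type*} [LinearOrder α]

theorem isGreatest_induction {b : α}
    {motive : ∀ S : Finset α, IsGreatest (S : Set α) b → Prop}
    (singleton : motive {b} (by simp))
    (insert : ∀ (a d : α) (S : Finset α), a < d → IsLeast (S : Set α) d →
      ∀ (hS : IsGreatest (S : Set α) b) (haS : IsGreatest (insert a S : Finset α) b),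
        motive S hS → motive (insert a S) haS)
    (S : Finset α) (hS : IsGreatest (S : Set α) b) : motive S hS := by
  induction S using Finset.induction_on_min with
  | empty => simp [IsGreatest] at hS
  | insert a S ha ih =>
    rcases S.eq_empty_or_nonempty with rfl | hne
    · obtain rfl : b = a := by simpa using hS.1
      exact singleton
    · have hd := S.isLeast_min' hne
      have had := ha _ hd.1
      have hb : IsGreatest (S : Set α) b := by
        refine ⟨?_, fun x hx => hS.2 (by simp [Finset.mem_coe.mp hx])⟩
        rcases Finset.mem_insert.mp hS.1 with rfl | hb
        · exact absurd (hS.2 (by simp [hd.1])) had.not_ge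
        · exact hb
      exact insert a _ S had hd hb hS (ih hb)

variable {I : Finset α} {i n : α}

theorem isGreatest_filter_le (hi : i ∈ I) : IsGreatest ((I.filter (· ≤ i) : Finset α) : Set α) i :=
  ⟨by simpa using hi, by simp [upperBounds]⟩

theorem isLeast_filter_ge (hi : i ∈ I) : IsLeast ((I.filter (i ≤ ·) : Finset α) : Set α) i :=
  ⟨by simpa using hi, by simp [lowerBounds]⟩

theorem isGreatest_filter_ge (hi : i ∈ I) (hn : IsGreatest (I : Set α) n) :
    IsGreatest ((I.filter (i ≤ ·) : Finset α) : Set α) n :=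
  ⟨Finset.mem_filter.mpr ⟨hn.1, hn.2 hi⟩, fun _ hx => hn.2 (Finset.mem_filter.mp hx).1⟩

end FiniteChains

section FSet

variable {F : Type} [Field F] {N : ℕ} {S T : Finset ℕ} {a b m : ℕ}

theorem fSet_singleton (a : ℕ) : fSet F N {a} = 1 := by
  rw [fSet, Finset.sort_singleton, fList]
  simp

theorem fSet_insert (hb : IsLeast (T : Set ℕ) b) (hab : a < b) :
    fSet F N (insert a T) = fij F N a b * fSet F N T := by
  have ha : (insert a T).sort = a :: T.sort :=
    Finset.sort_insert _ (fun x hx => (hab.trans_le (hb.2 hx)).le) fun h => (hb.2 h).not_gt hab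
  have hT : T.sort = b :: (T.erase b).sort := by
    rw [← Finset.sort_insert _ (fun x hx => hb.2 (Finset.mem_of_mem_erase hx))
      (Finset.notMem_erase b T), Finset.insert_erase hb.1]
  rw [fSet, fSet, ha, hT, fList]

theorem fSet_union (ha : IsGreatest (S : Set ℕ) a) (hb : IsLeast (T : Set ℕ) b) (hab : a < b) :
    fSet F N (S ∪ T) = fSet F N S * fij F N a b * fSet F N T := by
  induction S, ha using isGreatest_induction with
  | singleton => rw [← Finset.insert_eq, fSet_insert hb hab, fSet_singleton, one_mul]
  | insert c d S hcd hd ha _ ih =>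
    have hdb : d < b := (hd.2 ha.1).trans_lt hab
    have hdU : IsLeast ((S ∪ T : Finset ℕ) : Set ℕ) d := by
      rw [Finset.coe_union, ← min_eq_left hdb.le]
      exact hd.union hb
    rw [Finset.insert_union, fSet_insert hdU hcd, ih, fSet_insert hd hcd]
    simp only [mul_assoc]

theorem hasWeight_fSet (m : ℕ) (ha : IsLeast (S : Set ℕ) a) (hb : IsGreatest (S : Set ℕ) b) :
    HasWeight m (pairε m b - pairε m a) (fSet F N S) := by
  induction S, hb using isGreatest_induction generalizing a with
  | singleton =>
    obtain rfl : a = b := by simpa using ha.1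
    rw [fSet_singleton, sub_self]
    exact .one
  | insert c d S hcd hd _ _ ih =>
    obtain rfl : a = c := ha.unique (by simpa [hcd.le] using hd.insert c)
    rw [fSet_insert hd hcd, ← sub_add_sub_cancel']
    exact (hasWeight_fij m hcd).mul (ih hd)

theorem commute_egen_fSet (h : (∀ x ∈ S, m < x) ∨ ∀ x ∈ S, x ≤ m) :
    Commute (egen F N m) (fSet F N S) := by
  induction S using Finset.induction_on_min with
  | empty => simp [fSet, fList]
  | insert a S ha ih =>
    rcases S.eq_empty_or_nonempty with rfl | hS
    · simp [fSet_singleton]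
    · have hd := S.isLeast_min' hS
      have had := ha _ hd.1
      simp only [Finset.forall_mem_insert] at h
      rw [fSet_insert hd had]
      exact (commute_egen_fij had (h.imp And.left fun h => h.2 _ hd.1)).mul_right
        (ih (h.imp And.right And.right))

end FSet

section IndexSets

variable {F : Type} [Field F] {N : ℕ} {I : Finset ℕ} {j : ℕ}

theorem mem_rSet : j ∈ rSet N I ↔ j ≤ N ∧ j + 1 ∉ I := by
  simp only [rSet, Finset.mem_image, Finset.mem_sdiff, Finset.mem_Icc]
  constructor
  · rintro ⟨s, ⟨hs, hsI⟩, rfl⟩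
    rw [Nat.sub_add_cancel hs.1]
    exact ⟨by omega, hsI⟩
  · exact fun h => ⟨j + 1, ⟨by omega, h.2⟩, rfl⟩

theorem isGreatest_of_mem_II (hI : I ∈ II N) : IsGreatest (I : Set ℕ) (N + 1) := by
  simp only [II, Finset.mem_filter, Finset.mem_powerset] at hI
  exact ⟨hI.2.2, fun _ hx => (Finset.mem_Icc.mp (hI.1 hx)).2⟩

theorem HIval_erase_succ (lam : ℕ → ℤ) (hj : j ≤ N) (hjI : j + 1 ∈ I) :
    HIval F N lam (I.erase (j + 1)) = hval F lam j * HIval F N lam I := by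
  have hr : rSet N (I.erase (j + 1)) = insert j (rSet N I) := by
    ext x
    simp only [mem_rSet, Finset.mem_insert, Finset.mem_erase]
    grind
  rw [HIval, hr, Finset.prod_insert fun h => (mem_rSet.mp h).2 hjI, HIval]

end IndexSets

section HighestWeightVector

variable {F : Type} [Field F] {N : ℕ} {M : Type*} [AddCommGroup M] [Module (Uq F N) M]
  [Module (kk F) M]

variable (F N) in
/-- `w` is a highest weight vector of weight `lam` in a `U`-module. Nonvanishing is not required,
so these are exactly the images of `v_λ` under homomorphisms from the Verma module. -/
structure IsHighestWeightVector (lam : ℕ → ℤ) (w : M) : Prop where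
  egen_smul' : ∀ j, 1 ≤ j ∧ j ≤ N → egen F N j • w = 0
  kgen_smul : ∀ j, 1 ≤ j ∧ j ≤ N → kgen F N j • w = qq F ^ lam j • w

theorem IsHighestWeightVector.egen_smul {lam : ℕ → ℤ} {w : M}
    (h : IsHighestWeightVector F N lam w) (j : ℕ) : egen F N j • w = 0 := by
  by_cases hj : 1 ≤ j ∧ j ≤ N
  · exact h.egen_smul' j hj
  · rw [egen, dif_neg hj, zero_smul]

theorem isHighestWeightVector_hw (lam : ℕ → ℤ) :
    IsHighestWeightVector F N lam (hw F N lam) where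
  egen_smul' j hj := by
    rw [hw, ← Submodule.Quotient.mk_smul, Submodule.Quotient.mk_eq_zero, smul_eq_mul, mul_one]
    exact Submodule.subset_span (.inl ⟨j, hj.1, hj.2, rfl⟩)
  kgen_smul j hj := by
    rw [hw, ← Submodule.Quotient.mk_smul, ← Submodule.Quotient.mk_smul, Submodule.Quotient.eq,
      smul_eq_mul, mul_one, ← Algebra.algebraMap_eq_smul_one]
    exact Submodule.subset_span (.inr ⟨j, hj.1, hj.2, rfl⟩)

variable [IsScalarTower (kk F) (Uq F N) M]

theorem sq_smul_of_smul_eq_qq_zpow {x : Uq F N} {w : M} {n : ℤ} (h : x • w = qq F ^ n • w) :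
    x ^ 2 • w = vv F ^ n • w := by
  rw [pow_two, mul_smul, h, smul_comm, h, smul_smul, ← pow_two, qq_zpow_sq]

theorem pairσ_succ (lam : ℕ → ℤ) (i : ℕ) : pairσ lam (i + 1) = pairσ lam i + lam (i + 1) :=
  Finset.sum_Icc_succ_top (by omega) lam

theorem list_prod_qq_zpow (lam : ℕ → ℤ) (i : ℕ) :
    ((List.range i).map fun j => qq F ^ lam (j + 1)).prod = qq F ^ pairσ lam i := by
  induction i with
  | zero => simp [pairσ]
  | succ i ih => rw [List.prod_range_succ, ih, pairσ_succ, zpow_add₀ (qq_ne_zero F)]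

variable {lam : ℕ → ℤ} {c : ℤ} {i j : ℕ} {w : M}

namespace IsHighestWeightVector

theorem kinvgen_smul (h : IsHighestWeightVector F N lam w) (hj : 1 ≤ j ∧ j ≤ N) :
    kinvgen F N j • w = qq F ^ (-lam j) • w := by
  rw [zpow_neg, eq_inv_smul_iff₀ (zpow_ne_zero _ (qq_ne_zero F)), smul_comm, ← h.kgen_smul j hj,
    smul_smul, kinvgen_mul_kgen hj, one_smul]

theorem kσ_smul (h : IsHighestWeightVector F N lam w) (hi : i ≤ N) :
    kσ F N i • w = qq F ^ pairσ lam i • w := by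
  rw [kσ, list_prod_smul_eq_smul (c := fun j => qq F ^ lam (j + 1)), list_prod_qq_zpow]
  intro j hj
  have := List.mem_range.mp hj
  exact h.kgen_smul _ ⟨by omega, by omega⟩

theorem kσinv_smul (h : IsHighestWeightVector F N lam w) (hi : i ≤ N) :
    kσinv F N i • w = qq F ^ (-pairσ lam i) • w := by
  rw [kσinv, list_prod_smul_eq_smul (c := fun j => qq F ^ (-lam (j + 1))),
    list_prod_qq_zpow (fun j => -lam j), pairσ, pairσ, Finset.sum_neg_distrib]
  intro j hj
  have := List.mem_range.mp hj
  exact h.kinvgen_smul ⟨by omega, by omega⟩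

theorem hElt_smul (h : IsHighestWeightVector F N lam w) (hi : i ≤ N) :
    hElt F N i • w = hval F lam i • w := by
  have hK := sq_smul_of_smul_eq_qq_zpow (h.kσ_smul hi)
  have hKinv := sq_smul_of_smul_eq_qq_zpow (h.kσinv_smul hi)
  have hexp : vv F ^ (-(pairσ lam i + (i : ℤ) - 1)) =
      vv F ^ (1 - (i : ℤ)) * vv F ^ (-pairσ lam i) := by
    rw [← zpow_add₀ (vv_ne_zero F)]
    ring_nf
  have hprod : (KσInv F N i * (vv F ^ (i : ℤ) • Kσ F N i - vv F ^ (-(i : ℤ)) • KσInv F N i)) • w =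
      (vv F ^ (-pairσ lam i) *
        (vv F ^ (pairσ lam i + i) - vv F ^ (-(pairσ lam i + (i : ℤ))))) • w := by
    rw [Kσ, KσInv, mul_smul, sub_smul, smul_assoc, smul_assoc, hK, hKinv, smul_smul, smul_smul,
      ← sub_smul, smul_comm, hKinv, smul_smul, mul_comm, neg_add]
    simp only [zpow_add₀ (vv_ne_zero F), mul_comm]
  rw [hElt, smul_assoc, hprod, smul_smul, hval, qint, hexp]
  congr 1
  ring

theorem HI_smul (h : IsHighestWeightVector F N lam w) (I : Finset ℕ) :
    HI F N I • w = HIval F N lam I • w := by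
  rw [HI, list_prod_smul_eq_smul (c := hval F lam), HIval]
  · rw [← Multiset.prod_coe, ← Multiset.map_coe, Finset.sort_eq, Finset.prod_eq_multiset_prod]
  · intro i hi
    exact h.hElt_smul (mem_rSet.mp (Finset.mem_sort _ |>.mp hi)).1

theorem kgen_sq_smul {x : Uq F N} (h : IsHighestWeightVector F N lam w) (hi : 1 ≤ i ∧ i ≤ N)
    (hx : HasWeight i c x) : kgen F N i ^ 2 • x • w = vv F ^ (c + lam i) • x • w := by
  rw [smul_smul, hx.semiconjBy_kgen_sq.eq, smul_mul_assoc, smul_assoc, mul_smul,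
    sq_smul_of_smul_eq_qq_zpow (h.kgen_smul i hi), smul_comm x, smul_smul,
    zpow_add₀ (vv_ne_zero F)]

theorem kinvgen_sq_smul {x : Uq F N} (h : IsHighestWeightVector F N lam w) (hi : 1 ≤ i ∧ i ≤ N)
    (hx : HasWeight i c x) : kinvgen F N i ^ 2 • x • w = vv F ^ (-(c + lam i)) • x • w := by
  rw [smul_smul, hx.semiconjBy_kinvgen_sq.eq, smul_mul_assoc, smul_assoc, mul_smul,
    sq_smul_of_smul_eq_qq_zpow (h.kinvgen_smul hi), smul_comm x, smul_smul, neg_add,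
    zpow_add₀ (vv_ne_zero F)]

end IsHighestWeightVector

end HighestWeightVector

section CriticalFactor

variable {F : Type} [Field F] {N : ℕ} {M : Type*} [AddCommGroup M] [Module (Uq F N) M]
  [Module (kk F) M] [IsScalarTower (kk F) (Uq F N) M] {lam : ℕ → ℤ} {c : ℤ} {i a b n : ℕ} {w : M}

namespace IsHighestWeightVector

section Commuting

variable {P B : Uq F N}

theorem egen_smul_mul_fgen_mul (h : IsHighestWeightVector F N lam w) (hi : 1 ≤ i ∧ i ≤ N)
    (hP : Commute (egen F N i) P) (hB : Commute (egen F N i) B) (hBc : HasWeight i c B) :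
    egen F N i • (P * fgen F N i * B) • w = qint F (c + lam i) • (P * B) • w := by
  have hcartan : ((vv F - (vv F)⁻¹)⁻¹ • (kgen F N i ^ 2 - kinvgen F N i ^ 2)) • B • w =
      qint F (c + lam i) • B • w := by
    rw [smul_assoc, sub_smul, h.kgen_sq_smul hi hBc, h.kinvgen_sq_smul hi hBc, ← sub_smul,
      smul_smul, qint, div_eq_inv_mul]
  rw [smul_mul_mul_smul_of_commute hP hB (h.egen_smul i)
    ((egen_mul_fgen_self i).trans (by rw [one_mul])) hcartan, mul_one]

theorem egen_smul_mul_fij_succ_right_mul (h : IsHighestWeightVector F N lam w)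
    (hi : 1 ≤ i ∧ i ≤ N) (hai : a < i) (hP : Commute (egen F N i) P) (hB : Commute (egen F N i) B)
    (hBc : HasWeight i c B) :
    egen F N i • (P * fij F N a (i + 1) * B) • w =
      (-(qq F)⁻¹ * vv F ^ (-(c + lam i))) • (P * fij F N a i * B) • w :=
  smul_mul_mul_smul_of_commute hP hB (h.egen_smul i) (egen_mul_fij_succ_right hai)
    (by rw [smul_assoc, h.kinvgen_sq_smul hi hBc, smul_smul])

theorem egen_smul_mul_fij_left_mul (h : IsHighestWeightVector F N lam w)
    (hi : 1 ≤ i ∧ i ≤ N) (hib : i + 1 < b) (hP : Commute (egen F N i) P)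
    (hB : Commute (egen F N i) B) (hBc : HasWeight i c B) :
    egen F N i • (P * fij F N i b * B) • w =
      (qq F * vv F ^ (c + lam i)) • (P * fij F N (i + 1) b * B) • w :=
  smul_mul_mul_smul_of_commute hP hB (h.egen_smul i) (egen_mul_fij_left hib)
    (by rw [smul_assoc, h.kgen_sq_smul hi hBc, smul_smul])

end Commuting

variable {S T : Finset ℕ}

theorem egen_smul_fSet_union (h : IsHighestWeightVector F N lam w) (hi : 1 ≤ i ∧ i ≤ N)
    (hS : IsGreatest (S : Set ℕ) i) (hT : IsLeast (T : Set ℕ) (i + 1))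
    (hn : IsGreatest (T : Set ℕ) n) :
    egen F N i • fSet F N (S ∪ T) • w =
      qint F (1 + pairε i n + lam i) • (fSet F N S * fSet F N T) • w := by
  have hTc : HasWeight i (1 + pairε i n) (fSet F N T) := by
    simpa [pairε, add_comm] using hasWeight_fSet i hT hn
  rw [fSet_union hS hT i.lt_succ_self, fij_succ_self]
  exact h.egen_smul_mul_fgen_mul hi (commute_egen_fSet (.inr hS.2))
    (commute_egen_fSet (.inl hT.2)) hTc

theorem egen_smul_fSet_erase_union (h : IsHighestWeightVector F N lam w) (hi : 1 ≤ i ∧ i ≤ N)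
    (hS : IsGreatest (S : Set ℕ) i) (hSi : (S.erase i).Nonempty)
    (hT : IsLeast (T : Set ℕ) (i + 1)) (hn : IsGreatest (T : Set ℕ) n) :
    egen F N i • fSet F N (S.erase i ∪ T) • w =
      (-(qq F)⁻¹ * vv F ^ (-(1 + pairε i n + lam i))) • (fSet F N S * fSet F N T) • w := by
  have hTc : HasWeight i (1 + pairε i n) (fSet F N T) := by
    simpa [pairε, add_comm] using hasWeight_fSet i hT hn
  have ha := (S.erase i).isGreatest_max' hSi
  have hai : (S.erase i).max' hSi < i :=
    (hS.2 (Finset.mem_of_mem_erase ha.1)).lt_of_ne (Finset.ne_of_mem_erase ha.1)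
  have hfS : fSet F N S = fSet F N (S.erase i) * fij F N ((S.erase i).max' hSi) i := by
    have := fSet_union (F := F) (N := N) ha (Finset.coe_singleton i ▸ isLeast_singleton) hai
    rwa [fSet_singleton, mul_one, Finset.union_comm, ← Finset.insert_eq,
      Finset.insert_erase hS.1] at this
  rw [fSet_union ha hT (by omega), hfS]
  exact h.egen_smul_mul_fij_succ_right_mul hi hai
    (commute_egen_fSet (.inr fun x hx => hS.2 (Finset.mem_of_mem_erase hx)))
    (commute_egen_fSet (.inl hT.2)) hTc

theorem egen_smul_fSet_union_erase (h : IsHighestWeightVector F N lam w) (hi : 1 ≤ i ∧ i ≤ N)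
    (hS : IsGreatest (S : Set ℕ) i) (hT : IsLeast (T : Set ℕ) (i + 1))
    (hn : IsGreatest (T : Set ℕ) n) (hin : i + 1 < n) :
    egen F N i • fSet F N (S ∪ T.erase (i + 1)) • w =
      (qq F * vv F ^ lam i) • (fSet F N S * fSet F N T) • w := by
  have hn' : IsGreatest ((T.erase (i + 1) : Finset ℕ) : Set ℕ) n :=
    ⟨Finset.mem_erase.mpr ⟨hin.ne', hn.1⟩, fun x hx => hn.2 (Finset.mem_of_mem_erase hx)⟩
  have hTi : (T.erase (i + 1)).Nonempty := ⟨n, hn'.1⟩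
  have hb := (T.erase (i + 1)).isLeast_min' hTi
  have hib : i + 1 < (T.erase (i + 1)).min' hTi :=
    (hT.2 (Finset.mem_of_mem_erase hb.1)).lt_of_ne' (Finset.ne_of_mem_erase hb.1)
  have hTc : HasWeight i 0 (fSet F N (T.erase (i + 1))) := by
    have := hasWeight_fSet (F := F) (N := N) i hb hn'
    grind [pairε]
  have hfT : fSet F N T = fij F N (i + 1) ((T.erase (i + 1)).min' hTi) *
      fSet F N (T.erase (i + 1)) := by
    rw [← fSet_insert hb hib, Finset.insert_erase hT.1]
  rw [fSet_union hS hb (by omega), hfT, ← mul_assoc, ← zero_add (lam i)]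
  exact h.egen_smul_mul_fij_left_mul hi hib (commute_egen_fSet (.inr hS.2))
    (commute_egen_fSet (.inl fun x hx => hT.2 (Finset.mem_of_mem_erase hx))) hTc

theorem smul_mul_HI_smul (h : IsHighestWeightVector F N lam w) {x y z : Uq F N} {c d : kk F}
    {I J : Finset ℕ} (hx : x • y • w = c • z • w)
    (hcd : c * HIval F N lam J = d * HIval F N lam I) :
    x • (y * HI F N J) • w = (d • (z * HI F N I)) • w := by
  rw [mul_smul, h.HI_smul, smul_comm y, smul_comm x, hx, smul_smul, mul_comm, hcd, smul_assoc,
    mul_smul z, h.HI_smul, smul_comm z, smul_smul]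

end IsHighestWeightVector

end CriticalFactor

section Coefficients

variable {F : Type} [Field F] {i : ℕ}

/-- `s_i = (λ + ρ, σ_i) = (λ, σ_i) + i`. -/
def shiftedPairσ (lam : ℕ → ℤ) (i : ℕ) : ℤ := pairσ lam i + i

theorem shiftedPairσ_eq_pred_add (lam : ℕ → ℤ) (hi : 1 ≤ i) :
    shiftedPairσ lam i = shiftedPairσ lam (i - 1) + lam i + 1 := by
  obtain ⟨j, rfl⟩ := Nat.exists_eq_add_of_le' hi
  rw [shiftedPairσ, shiftedPairσ, Nat.add_sub_cancel, pairσ_succ]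
  push_cast
  ring

theorem hval_eq_shiftedPairσ (lam : ℕ → ℤ) (i : ℕ) : hval F lam i =
    -(qq F)⁻¹ * vv F ^ (1 - shiftedPairσ lam i) * qint F (shiftedPairσ lam i) := by
  rw [hval, shiftedPairσ, neg_sub]

theorem neg_inv_qq_mul_zpow_mul_hval_pred (lam : ℕ → ℤ) (hi : 1 ≤ i) (p : ℤ) :
    -(qq F)⁻¹ * vv F ^ (-(1 + p + lam i)) * hval F lam (i - 1) =
      vv F ^ (-(p + shiftedPairσ lam i)) * qint F (shiftedPairσ lam (i - 1)) := by
  have hq : (qq F)⁻¹ * (qq F)⁻¹ = vv F ^ (-1 : ℤ) := by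
    rw [zpow_neg_one, vv, pow_two, mul_inv]
  have hv : vv F ^ (-(p + shiftedPairσ lam i)) = vv F ^ (-1 : ℤ) * vv F ^ (-(1 + p + lam i)) *
      vv F ^ (1 - shiftedPairσ lam (i - 1)) := by
    rw [← zpow_add₀ (vv_ne_zero F), ← zpow_add₀ (vv_ne_zero F), shiftedPairσ_eq_pred_add lam hi]
    ring_nf
  rw [hval_eq_shiftedPairσ, hv, ← hq]
  ring

theorem qq_mul_zpow_mul_hval (lam : ℕ → ℤ) (hi : 1 ≤ i) :
    qq F * vv F ^ lam i * hval F lam i =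
      -(vv F ^ (-shiftedPairσ lam (i - 1)) * qint F (shiftedPairσ lam i)) := by
  have hv : vv F ^ (-shiftedPairσ lam (i - 1)) =
      vv F ^ lam i * vv F ^ (1 - shiftedPairσ lam i) := by
    rw [← zpow_add₀ (vv_ne_zero F), shiftedPairσ_eq_pred_add lam hi]
    ring_nf
  rw [hval_eq_shiftedPairσ, hv]
  linear_combination (-vv F ^ lam i * vv F ^ (1 - shiftedPairσ lam i) *
    qint F (shiftedPairσ lam i)) * mul_inv_cancel₀ (qq_ne_zero F)

end Coefficients

section Main

variable {F : Type} [Field F] {N : ℕ} {M : Type*} [AddCommGroup M] [Module (Uq F N) M]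
  [Module (kk F) M] [IsScalarTower (kk F) (Uq F N) M] {lam : ℕ → ℤ} {i n : ℕ} {w : M}
  {I : Finset ℕ}

namespace IsHighestWeightVector

theorem egen_smul_fSet_mul_HI (h : IsHighestWeightVector F N lam w) (hi : 1 ≤ i ∧ i ≤ N)
    (hiI : i ∈ I) (hsI : i + 1 ∈ I) (hn : IsGreatest (I : Set ℕ) n) :
    egen F N i • (fSet F N I * HI F N I) • w = (qint F (1 + pairε i n + lam i) •
      (fSet F N (I.filter (· ≤ i)) * fSet F N (I.filter (i + 1 ≤ ·)) * HI F N I)) • w := by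
  have hI : I = I.filter (· ≤ i) ∪ I.filter (i + 1 ≤ ·) := by grind
  refine h.smul_mul_HI_smul ?_ rfl
  conv_lhs => rw [hI]
  exact h.egen_smul_fSet_union hi (isGreatest_filter_le hiI) (isLeast_filter_ge hsI)
    (isGreatest_filter_ge hsI hn)

theorem egen_smul_fSet_erase_mul_HI (h : IsHighestWeightVector F N lam w) (hi : 1 ≤ i ∧ i ≤ N)
    (hiI : i ∈ I) (hsI : i + 1 ∈ I) (hn : IsGreatest (I : Set ℕ) n) (ha : ∃ a ∈ I, a < i) :
    egen F N i • (fSet F N (I.erase i) * HI F N (I.erase i)) • w =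
      ((vv F ^ (-(pairε i n + shiftedPairσ lam i)) * qint F (shiftedPairσ lam (i - 1))) •
        (fSet F N (I.filter (· ≤ i)) * fSet F N (I.filter (i + 1 ≤ ·)) * HI F N I)) • w := by
  have hne : ((I.filter (· ≤ i)).erase i).Nonempty := by
    obtain ⟨a, haI, hai⟩ := ha
    exact ⟨a, Finset.mem_erase.mpr ⟨hai.ne, Finset.mem_filter.mpr ⟨haI, hai.le⟩⟩⟩
  have hI : I.erase i = (I.filter (· ≤ i)).erase i ∪ I.filter (i + 1 ≤ ·) := by grind
  have hH : HIval F N lam (I.erase i) = hval F lam (i - 1) * HIval F N lam I := by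
    obtain ⟨j, rfl⟩ := Nat.exists_eq_add_of_le' hi.1
    exact HIval_erase_succ lam (by omega) hiI
  refine h.smul_mul_HI_smul (c := -(qq F)⁻¹ * vv F ^ (-(1 + pairε i n + lam i))) ?_ ?_
  · rw [hI]
    exact h.egen_smul_fSet_erase_union hi (isGreatest_filter_le hiI) hne
      (isLeast_filter_ge hsI) (isGreatest_filter_ge hsI hn)
  · rw [hH, ← mul_assoc, neg_inv_qq_mul_zpow_mul_hval_pred lam hi.1]

theorem egen_smul_fSet_erase_succ_mul_HI (h : IsHighestWeightVector F N lam w)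
    (hi : 1 ≤ i ∧ i ≤ N) (hiI : i ∈ I) (hsI : i + 1 ∈ I) (hn : IsGreatest (I : Set ℕ) n)
    (hin : i + 1 < n) :
    egen F N i • (fSet F N (I.erase (i + 1)) * HI F N (I.erase (i + 1))) • w =
      (-(vv F ^ (-shiftedPairσ lam (i - 1)) * qint F (shiftedPairσ lam i)) •
        (fSet F N (I.filter (· ≤ i)) * fSet F N (I.filter (i + 1 ≤ ·)) * HI F N I)) • w := by
  have hI : I.erase (i + 1) = I.filter (· ≤ i) ∪ (I.filter (i + 1 ≤ ·)).erase (i + 1) := by grind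
  refine h.smul_mul_HI_smul (c := qq F * vv F ^ lam i) ?_ ?_
  · rw [hI]
    exact h.egen_smul_fSet_union_erase hi (isGreatest_filter_le hiI) (isLeast_filter_ge hsI)
      (isGreatest_filter_ge hsI hn) hin
  · rw [HIval_erase_succ lam hi.2 hsI, ← mul_assoc, qq_mul_zpow_mul_hval lam hi.1]

end IsHighestWeightVector

theorem stmt8_general (h : IsHighestWeightVector F N lam w) (h1 : 1 < i) (h2 : i ≤ N)
    (hI : I ∈ II N) (hiI : i ∈ I) (hsI : i + 1 ∈ I) :
    let s : ℕ → ℤ := fun j => pairσ lam j + (j : ℤ)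
    let I₁ : Finset ℕ := I.filter (· ≤ i)
    let I₂ : Finset ℕ := I.filter fun x => i + 1 ≤ x
    ((i = N →
      egen F N i • ((fSet F N I * HI F N I) • w) =
        (qint F (lam i) • (fSet F N I₁ * fSet F N I₂ * HI F N I)) • w) ∧
    (i < N →
      egen F N i • ((fSet F N I * HI F N I) • w) =
        (qint F (1 + lam i) • (fSet F N I₁ * fSet F N I₂ * HI F N I)) • w) ∧
    (i = N →
      egen F N i • ((fSet F N (I.erase i) * HI F N (I.erase i)) • w) =
        ((qq F ^ 2 * vv F ^ (-(s i)) * qint F (s (i - 1))) •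
          (fSet F N I₁ * fSet F N I₂ * HI F N I)) • w) ∧
    (i < N →
      egen F N i • ((fSet F N (I.erase i) * HI F N (I.erase i)) • w) =
        ((vv F ^ (-(s i)) * qint F (s (i - 1))) •
          (fSet F N I₁ * fSet F N I₂ * HI F N I)) • w) ∧
    (i < N →
      egen F N i • ((fSet F N (I.erase (i + 1)) * HI F N (I.erase (i + 1))) • w) =
        ((-(vv F ^ (-(s (i - 1))) * qint F (s i))) •
          (fSet F N I₁ * fSet F N I₂ * HI F N I)) • w)) := by
  intro s I₁ I₂
  have hi : 1 ≤ i ∧ i ≤ N := ⟨h1.le, h2⟩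
  have hn := isGreatest_of_mem_II hI
  have hone : ∃ a ∈ I, a < i := ⟨1, (Finset.mem_filter.mp hI).2.1, h1⟩
  have ha := h.egen_smul_fSet_mul_HI hi hiI hsI hn
  have hb := h.egen_smul_fSet_erase_mul_HI hi hiI hsI hn hone
  have hp : i = N → pairε i (N + 1) = -1 := by grind [pairε]
  have hp' : i < N → pairε i (N + 1) = 0 := by grind [pairε]
  refine ⟨fun hN => ?_, fun hN => ?_, fun hN => ?_, fun hN => ?_, fun hN => ?_⟩
  · rwa [hp hN, add_neg_cancel, zero_add] at ha
  · rwa [hp' hN, add_zero] at ha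
  · rwa [hp hN, neg_add, neg_neg, zpow_one_add₀ (vv_ne_zero F)] at hb
  · rwa [hp' hN, zero_add] at hb
  · exact h.egen_smul_fSet_erase_succ_mul_HI hi hiI hsI hn (Nat.succ_lt_succ hN)

end Main

/-- for `I ∈ S_i`, any weight `λ`, and `s_j = (λ,σ_j)+j`:
(a) for `1 < i ≤ N`, `e_i f_I H_I v_λ = [(λ,α_i)]_v f_{I₁}f_{I₂}H_I v_λ` if `i = N`
and `= [1+(λ,α_i)]_v f_{I₁}f_{I₂}H_I v_λ` if `i < N`;
(b) for `1 < i ≤ N`, `e_i f_{I⁺} H_{I⁺} v_λ = q² v^{-s_i}[s_{i-1}]_v f_{I₁}f_{I₂}H_I v_λ`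
if `i = N` and `= v^{-s_i}[s_{i-1}]_v f_{I₁}f_{I₂}H_I v_λ` if `i < N`;
(c) for `1 < i < N`, `e_i f_{I⁻} H_{I⁻} v_λ = -v^{-s_{i-1}}[s_i]_v f_{I₁}f_{I₂}H_I v_λ`. -/
theorem stmt8 (F : Type) [Field F] (N : ℕ) (lam : ℕ → ℤ) (i : ℕ)
    (h1 : 1 < i) (h2 : i ≤ N) (I : Finset ℕ) (hI : I ∈ II N)
    (hiI : i ∈ I) (hi1I : i + 1 ∈ I) :
    let s : ℕ → ℤ := fun j => pairσ lam j + (j : ℤ)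
    let I₁ : Finset ℕ := I.filter (· ≤ i)
    let I₂ : Finset ℕ := I.filter fun x => i + 1 ≤ x
    ((i = N →
      egen F N i • ((fSet F N I * HI F N I) • hw F N lam) =
        (qint F (lam i) • (fSet F N I₁ * fSet F N I₂ * HI F N I)) • hw F N lam) ∧
    (i < N →
      egen F N i • ((fSet F N I * HI F N I) • hw F N lam) =
        (qint F (1 + lam i) • (fSet F N I₁ * fSet F N I₂ * HI F N I)) • hw F N lam) ∧
    (i = N →
      egen F N i • ((fSet F N (I.erase i) * HI F N (I.erase i)) • hw F N lam) =
        ((qq F ^ 2 * vv F ^ (-(s i)) * qint F (s (i - 1))) •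
          (fSet F N I₁ * fSet F N I₂ * HI F N I)) • hw F N lam) ∧
    (i < N →
      egen F N i • ((fSet F N (I.erase i) * HI F N (I.erase i)) • hw F N lam) =
        ((vv F ^ (-(s i)) * qint F (s (i - 1))) •
          (fSet F N I₁ * fSet F N I₂ * HI F N I)) • hw F N lam) ∧
    (i < N →
      egen F N i • ((fSet F N (I.erase (i + 1)) * HI F N (I.erase (i + 1))) • hw F N lam) =
        ((-(vv F ^ (-(s (i - 1))) * qint F (s i))) •
          (fSet F N I₁ * fSet F N I₂ * HI F N I)) • hw F N lam)) :=
  stmt8_general (isHighestWeightVector_hw lam) h1 h2 hI hiI hi1I
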